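/- Let G be a finite abelian group having at least one proper non-trivial subgroup. Then γ(G) = 2 if and only if sfp(G) = exp(G) and sfp(G) is not a prime number. -/

import Mathlib

/-- `D` is a dominating set of the intersection graph `Γ(G)` of the group `G`:
every member of `D` is a proper non-trivial subgroup of `G`, and every proper
non-trivial subgroup of `G` either belongs to `D` or intersects some member of
`D` non-trivially. -/
def IsDomSet {G : Type*} [Group G] (D : Set (Subgroup G)) : Prop :=
  (∀ H ∈ D, H ≠ ⊥ ∧ H ≠ ⊤) ∧
    ∀ K : Subgroup G, K ≠ ⊥ → K ≠ ⊤ →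
      K ∈ D ∨ ∃ W ∈ D, W ≠ K ∧ K ⊓ W ≠ ⊥

/-- The domination number `γ(G)`: the smallest cardinality of a dominating set
of the intersection graph `Γ(G)`. -/
noncomputable def domNumber (G : Type*) [Group G] : ℕ :=
  sInf {n : ℕ | ∃ D : Set (Subgroup G), IsDomSet D ∧ D.ncard = n}

/-!
A non-empty set of proper non-trivial subgroups of a finite group dominates `Γ(G)` exactly when its
members together contain every element of prime order. Hence `γ(G) = 1` iff the elements of prime
order generate a proper subgroup; in the abelian case that subgroup consists of the solutions of
`x ^ sfp(G) = 1`, so this means `sfp(G) ≠ exp(G)`. If `sfp(G) = a * b` is composite, the solutions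
of `x ^ a = 1` and those of `x ^ b = 1` are two proper subgroups that together contain all elements
of prime order, so `γ(G) ≤ 2`. If `exp(G)` is prime, a dominating set covers `G`, and no group is
the union of two proper subgroups.
-/

open UniqueFactorizationMonoid (radical radical_dvd_self squarefree_radical)

section PrimeOrder

variable {G : Type*} [Group G]

theorem mem_of_orderOf_prime_of_inf_zpowers_ne_bot {x : G} (hx : (orderOf x).Prime)
    {W : Subgroup G} (hW : Subgroup.zpowers x ⊓ W ≠ ⊥) : x ∈ W := by
  have : Fact (Nat.card (Subgroup.zpowers x)).Prime := ⟨by rwa [Nat.card_zpowers]⟩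
  rcases (W.subgroupOf (Subgroup.zpowers x)).eq_bot_or_eq_top_of_prime_card with hbot | htop
  · rw [Subgroup.subgroupOf_eq_bot, disjoint_iff, inf_comm] at hbot
    exact absurd hbot hW
  · exact Subgroup.subgroupOf_eq_top.mp htop (Subgroup.mem_zpowers x)

theorem zpowers_ne_top_of_orderOf_prime {x : G} (hx : (orderOf x).Prime)
    (hG : ∃ K : Subgroup G, K ≠ ⊥ ∧ K ≠ ⊤) : Subgroup.zpowers x ≠ ⊤ := by
  intro htop
  have : Fact (Nat.card G).Prime := ⟨orderOf_eq_card_of_zpowers_eq_top htop ▸ hx⟩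
  obtain ⟨K, hbot, hne⟩ := hG
  exact K.eq_bot_or_eq_top_of_prime_card.elim hbot hne

theorem ne_one_of_orderOf_prime {M : Type*} [Monoid M] {x : M} (hx : (orderOf x).Prime) : x ≠ 1 :=
  mt orderOf_eq_one_iff.mpr hx.ne_one

theorem exists_mem_orderOf_prime (hG : IsMulTorsion G) {K : Subgroup G} (hK : K ≠ ⊥) :
    ∃ x ∈ K, (orderOf x).Prime := by
  obtain ⟨g, hgK, hg⟩ := K.bot_or_exists_ne_one.resolve_left hK
  obtain ⟨p, hp, hpg⟩ := Nat.exists_prime_and_dvd (mt orderOf_eq_one_iff.mp hg)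
  refine ⟨g ^ (orderOf g / p), K.pow_mem hgK _, ?_⟩
  rwa [orderOf_pow_orderOf_div (hG g).orderOf_pos.ne' hpg]

theorem mem_of_pow_mem_of_pow_mem_of_coprime {W : Subgroup G} {g : G} {a b : ℕ}
    (hab : a.Coprime b) (ha : g ^ a ∈ W) (hb : g ^ b ∈ W) : g ∈ W := by
  have bezout : (1 : ℤ) = a * a.gcdA b + b * a.gcdB b := by
    exact_mod_cast hab.gcd_eq_one ▸ Nat.gcd_eq_gcd_ab a b
  rw [← zpow_one g, bezout, zpow_add, zpow_mul, zpow_mul, zpow_natCast, zpow_natCast]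
  exact W.mul_mem (W.zpow_mem ha _) (W.zpow_mem hb _)

variable (G) in
/-- The subgroup generated by the elements of prime order. For a finite abelian group it is the
socle, the join of the minimal subgroups; a subgroup forms a dominating set by itself only if it
contains this one. -/
def primeOrderClosure : Subgroup G :=
  Subgroup.closure {x | (orderOf x).Prime}

theorem mem_primeOrderClosure_of_orderOf_prime {x : G} (hx : (orderOf x).Prime) :
    x ∈ primeOrderClosure G :=
  Subgroup.subset_closure hx

theorem primeOrderClosure_ne_bot [Nontrivial G] (hG : IsMulTorsion G) :
    primeOrderClosure G ≠ ⊥ := by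
  intro hbot
  obtain ⟨x, -, hx⟩ := exists_mem_orderOf_prime hG (K := ⊤) bot_ne_top.symm
  have hmem := mem_primeOrderClosure_of_orderOf_prime hx
  rw [hbot, Subgroup.mem_bot] at hmem
  exact ne_one_of_orderOf_prime hx hmem

theorem mem_primeOrderClosure_of_squarefree_of_pow_eq_one {n : ℕ} (hn : Squarefree n)
    {g : G} (hg : g ^ n = 1) : g ∈ primeOrderClosure G := by
  induction n using Nat.recOnPosPrimePosCoprime generalizing g with
  | zero => exact absurd hn not_squarefree_zero
  | one => exact (pow_one g ▸ hg) ▸ one_mem _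
  | prime_pow p k hp hk =>
    obtain rfl : k = 1 := ((Nat.squarefree_pow_iff hp.ne_one hk.ne').mp hn).2
    rw [pow_one] at hg
    rcases (Nat.dvd_prime hp).mp (orderOf_dvd_of_pow_eq_one hg) with hone | hprime
    · exact orderOf_eq_one_iff.mp hone ▸ one_mem _
    · exact mem_primeOrderClosure_of_orderOf_prime (hprime ▸ hp)
  | coprime a b _ _ hab iha ihb =>
    refine mem_of_pow_mem_of_pow_mem_of_coprime hab (ihb hn.of_mul_right ?_)
      (iha hn.of_mul_left ?_)
    · rw [← pow_mul, hg]
    · rw [← pow_mul, mul_comm, hg]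

end PrimeOrder

section RadicalOfCard

theorem orderOf_dvd_radical_natCard {G : Type*} [Group G] [Finite G] {x : G}
    (hx : (orderOf x).Prime) : orderOf x ∣ radical (Nat.card G) :=
  (UniqueFactorizationMonoid.dvd_radical_iff_of_irreducible hx Nat.card_pos.ne').mpr
    (orderOf_dvd_natCard x)

theorem radical_natCard_dvd_exponent (G : Type*) [Group G] [Finite G] :
    radical (Nat.card G) ∣ Monoid.exponent G := by
  rw [Nat.radical_eq_prod_primeFactors]
  refine Finset.prod_primes_dvd _ (fun p hp ↦ (Nat.prime_of_mem_primeFactors hp).prime) ?_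
  intro p hp
  have : Fact p.Prime := ⟨Nat.prime_of_mem_primeFactors hp⟩
  obtain ⟨x, hx⟩ := exists_prime_orderOf_dvd_card' (G := G) p (Nat.dvd_of_mem_primeFactors hp)
  exact hx ▸ Monoid.order_dvd_exponent x

variable {G : Type*} [CommGroup G]

theorem mem_ker_powMonoidHom_iff {m : ℕ} {g : G} :
    g ∈ (powMonoidHom m : G →* G).ker ↔ orderOf g ∣ m := by
  rw [MonoidHom.mem_ker, powMonoidHom_apply, orderOf_dvd_iff_pow_eq_one]

theorem ker_powMonoidHom_eq_top_iff {m : ℕ} :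
    (powMonoidHom m : G →* G).ker = ⊤ ↔ Monoid.exponent G ∣ m := by
  simp only [Subgroup.eq_top_iff', mem_ker_powMonoidHom_iff, Monoid.exponent_dvd]

variable [Finite G]

theorem ker_powMonoidHom_ne_bot {m : ℕ} (hm : ¬(Nat.card G).Coprime m) :
    (powMonoidHom m : G →* G).ker ≠ ⊥ := by
  obtain ⟨p, hp, hpG, hpm⟩ := Nat.Prime.not_coprime_iff_dvd.mp hm
  have : Fact p.Prime := ⟨hp⟩
  obtain ⟨x, rfl⟩ := exists_prime_orderOf_dvd_card' (G := G) p hpG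
  intro hbot
  have hmem := mem_ker_powMonoidHom_iff.mpr hpm
  rw [hbot, Subgroup.mem_bot] at hmem
  exact ne_one_of_orderOf_prime hp hmem

theorem primeOrderClosure_eq_ker_powMonoidHom :
    primeOrderClosure G = (powMonoidHom (radical (Nat.card G)) : G →* G).ker := by
  refine le_antisymm ((Subgroup.closure_le _).mpr fun x hx ↦ ?_) fun g hg ↦ ?_
  · exact mem_ker_powMonoidHom_iff.mpr (orderOf_dvd_radical_natCard hx)
  · exact mem_primeOrderClosure_of_squarefree_of_pow_eq_one squarefree_radical hg

theorem primeOrderClosure_eq_top_iff :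
    primeOrderClosure G = ⊤ ↔ radical (Nat.card G) = Monoid.exponent G := by
  rw [primeOrderClosure_eq_ker_powMonoidHom, ker_powMonoidHom_eq_top_iff]
  exact ⟨(radical_natCard_dvd_exponent G).antisymm, fun h ↦ h.symm.dvd⟩

end RadicalOfCard

section DominatingSet

variable {G : Type*} [Group G] {D : Set (Subgroup G)}

theorem IsDomSet.nonempty (hD : IsDomSet D) (hG : ∃ K : Subgroup G, K ≠ ⊥ ∧ K ≠ ⊤) :
    D.Nonempty := by
  obtain ⟨K, hbot, htop⟩ := hG
  rcases hD.2 K hbot htop with hK | ⟨W, hW, -⟩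
  exacts [⟨K, hK⟩, ⟨W, hW⟩]

theorem IsDomSet.exists_mem_of_orderOf_prime (hD : IsDomSet D) (hne : D.Nonempty) {x : G}
    (hx : (orderOf x).Prime) : ∃ W ∈ D, x ∈ W := by
  have hbot : Subgroup.zpowers x ≠ ⊥ :=
    mt Subgroup.zpowers_eq_bot.mp (ne_one_of_orderOf_prime hx)
  have htop : Subgroup.zpowers x ≠ ⊤ :=
    zpowers_ne_top_of_orderOf_prime hx ⟨hne.some, hD.1 _ hne.some_mem⟩
  rcases hD.2 _ hbot htop with hmem | ⟨W, hW, -, hmeet⟩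
  · exact ⟨_, hmem, Subgroup.mem_zpowers x⟩
  · exact ⟨W, hW, mem_of_orderOf_prime_of_inf_zpowers_ne_bot hx hmeet⟩

theorem isDomSet_of_forall_orderOf_prime (hG : IsMulTorsion G)
    (hproper : ∀ H ∈ D, H ≠ ⊥ ∧ H ≠ ⊤)
    (hcover : ∀ x : G, (orderOf x).Prime → ∃ W ∈ D, x ∈ W) : IsDomSet D := by
  refine ⟨hproper, fun K hK _ ↦ ?_⟩
  obtain ⟨x, hxK, hx⟩ := exists_mem_orderOf_prime hG hK
  obtain ⟨W, hW, hxW⟩ := hcover x hx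
  by_cases hWK : W = K
  · exact Or.inl (hWK ▸ hW)
  · refine Or.inr ⟨W, hW, hWK, fun hbot ↦ ne_one_of_orderOf_prime hx ?_⟩
    exact Subgroup.mem_bot.mp (hbot ▸ Subgroup.mem_inf.mpr ⟨hxK, hxW⟩)

theorem IsDomSet.exists_mem_of_exponent_prime (hD : IsDomSet D) (hne : D.Nonempty)
    (hexp : (Monoid.exponent G).Prime) (x : G) : ∃ W ∈ D, x ∈ W := by
  rcases (Nat.dvd_prime hexp).mp (Monoid.order_dvd_exponent x) with hone | hprime
  · exact ⟨hne.some, hne.some_mem, orderOf_eq_one_iff.mp hone ▸ one_mem _⟩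
  · exact hD.exists_mem_of_orderOf_prime hne (hprime ▸ hexp)

theorem IsDomSet.primeOrderClosure_le {W : Subgroup G} (hW : IsDomSet {W}) :
    primeOrderClosure G ≤ W := by
  refine (Subgroup.closure_le _).mpr fun x hx ↦ ?_
  obtain ⟨V, rfl, hxV⟩ := hW.exists_mem_of_orderOf_prime (Set.singleton_nonempty W) hx
  exact hxV

theorem isDomSet_singleton_primeOrderClosure (hG : IsMulTorsion G)
    (htop : primeOrderClosure G ≠ ⊤) : IsDomSet {primeOrderClosure G} := by
  have : Nontrivial G := Subgroup.nontrivial_iff.mp ⟨_, _, htop⟩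
  refine isDomSet_of_forall_orderOf_prime hG ?_ fun x hx ↦
    ⟨_, rfl, mem_primeOrderClosure_of_orderOf_prime hx⟩
  rintro H rfl
  exact ⟨primeOrderClosure_ne_bot hG, htop⟩

theorem isDomSet_pair_ker_powMonoidHom {G : Type*} [CommGroup G] [Finite G] {a b : ℕ}
    (hab : radical (Nat.card G) ∣ a * b) (ha : ¬radical (Nat.card G) ∣ a)
    (hb : ¬radical (Nat.card G) ∣ b) :
    IsDomSet {(powMonoidHom a : G →* G).ker, (powMonoidHom b : G →* G).ker} := by
  have ker_ne_top {m : ℕ} (hm : ¬radical (Nat.card G) ∣ m) : (powMonoidHom m : G →* G).ker ≠ ⊤ :=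
    fun htop ↦ hm <| (radical_natCard_dvd_exponent G).trans (ker_powMonoidHom_eq_top_iff.mp htop)
  have hcoprime_a : ¬(Nat.card G).Coprime a := fun h ↦
    hb ((h.coprime_dvd_left radical_dvd_self).dvd_of_dvd_mul_left hab)
  have hcoprime_b : ¬(Nat.card G).Coprime b := fun h ↦
    ha ((h.coprime_dvd_left radical_dvd_self).dvd_of_dvd_mul_right hab)
  refine isDomSet_of_forall_orderOf_prime isMulTorsion_of_finite ?_ fun x hx ↦ ?_
  · rintro H (rfl | rfl)
    · exact ⟨ker_powMonoidHom_ne_bot hcoprime_a, ker_ne_top ha⟩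
    · exact ⟨ker_powMonoidHom_ne_bot hcoprime_b, ker_ne_top hb⟩
  · rcases hx.dvd_mul.mp ((orderOf_dvd_radical_natCard hx).trans hab) with hxa | hxb
    · exact ⟨_, Or.inl rfl, mem_ker_powMonoidHom_iff.mpr hxa⟩
    · exact ⟨_, Or.inr rfl, mem_ker_powMonoidHom_iff.mpr hxb⟩

end DominatingSet

section DominationNumber

variable {G : Type*} [Group G]

variable (G) in
theorem exists_isDomSet_ncard_eq_domNumber :
    ∃ D : Set (Subgroup G), IsDomSet D ∧ D.ncard = domNumber G :=
  Nat.sInf_mem (s := {n | ∃ D : Set (Subgroup G), IsDomSet D ∧ D.ncard = n})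
    ⟨_, {K | K ≠ ⊥ ∧ K ≠ ⊤}, ⟨fun _ hK ↦ hK, fun _ hbot htop ↦ Or.inl ⟨hbot, htop⟩⟩, rfl⟩

theorem IsDomSet.domNumber_le_ncard {D : Set (Subgroup G)} (hD : IsDomSet D) :
    domNumber G ≤ D.ncard :=
  Nat.sInf_le ⟨D, hD, rfl⟩

theorem domNumber_pos [Finite G] (hG : ∃ K : Subgroup G, K ≠ ⊥ ∧ K ≠ ⊤) : 0 < domNumber G := by
  obtain ⟨D, hD, hcard⟩ := exists_isDomSet_ncard_eq_domNumber G
  exact hcard ▸ (hD.nonempty hG).ncard_pos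

theorem domNumber_eq_one_iff [Finite G] : domNumber G = 1 ↔ primeOrderClosure G ≠ ⊤ := by
  constructor
  · intro hone htop
    obtain ⟨D, hD, hcard⟩ := exists_isDomSet_ncard_eq_domNumber G
    obtain ⟨W, rfl⟩ := Set.ncard_eq_one.mp (hcard.trans hone)
    exact (hD.1 W rfl).2 (top_le_iff.mp (htop ▸ hD.primeOrderClosure_le))
  · intro htop
    have hdom := isDomSet_singleton_primeOrderClosure isMulTorsion_of_finite htop
    have hle : domNumber G ≤ 1 := by simpa using hdom.domNumber_le_ncard
    exact hle.antisymm (domNumber_pos ⟨_, hdom.1 _ rfl⟩)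

theorem domNumber_ne_two_of_exponent_prime (hexp : (Monoid.exponent G).Prime) :
    domNumber G ≠ 2 := by
  intro htwo
  obtain ⟨D, hD, hcard⟩ := exists_isDomSet_ncard_eq_domNumber G
  obtain ⟨A, B, -, rfl⟩ := Set.ncard_eq_two.mp (hcard.trans htwo)
  have hcover : ((⊤ : Subgroup G) : Set G) ⊆ A ∪ B := fun x _ ↦ by
    simpa using hD.exists_mem_of_exponent_prime (Set.insert_nonempty A {B}) hexp x
  rcases SubgroupClass.subset_union.mp hcover with hA | hB
  · exact (hD.1 A (by simp)).2 (top_le_iff.mp hA)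
  · exact (hD.1 B (by simp)).2 (top_le_iff.mp hB)

theorem domNumber_le_two_of_not_prime_radical {G : Type*} [CommGroup G] [Finite G] [Nontrivial G]
    (hprime : ¬(radical (Nat.card G)).Prime) : domNumber G ≤ 2 := by
  have htwo : 2 ≤ radical (Nat.card G) := Nat.two_le_radical_iff.mpr Finite.one_lt_card
  obtain ⟨a, b, ha, hb, hab⟩ := (Nat.not_prime_iff_exists_mul_eq htwo).mp hprime
  have hpos : 0 < a * b := hab ▸ Nat.radical_pos _
  have hdom := isDomSet_pair_ker_powMonoidHom hab.symm.dvd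
    (Nat.not_dvd_of_pos_of_lt (Nat.pos_of_mul_pos_right hpos) ha)
    (Nat.not_dvd_of_pos_of_lt (Nat.pos_of_mul_pos_left hpos) hb)
  exact hdom.domNumber_le_ncard.trans (by simpa using Set.ncard_insert_le _ {_})

end DominationNumber

/-- A finite abelian group `G` with a proper non-trivial subgroup satisfies
`γ(G) = 2` iff the square-free part of `|G|` equals the exponent of `G` and is
not a prime number. -/
theorem abelian_domNumber_eq_two_iff {G : Type*} [CommGroup G] [Finite G]
    (hG : ∃ K : Subgroup G, K ≠ ⊥ ∧ K ≠ ⊤) :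
    domNumber G = 2 ↔
      ((∏ p ∈ (Nat.card G).primeFactors, p) = Monoid.exponent G ∧
        ¬(∏ p ∈ (Nat.card G).primeFactors, p).Prime) := by
  rw [← Nat.radical_eq_prod_primeFactors, ← primeOrderClosure_eq_top_iff]
  constructor
  · intro htwo
    have htop : primeOrderClosure G = ⊤ := by
      by_contra hne
      exact absurd (htwo.symm.trans (domNumber_eq_one_iff.mpr hne)) (by decide)
    refine ⟨htop, fun hprime ↦ domNumber_ne_two_of_exponent_prime ?_ htwo⟩
    rwa [← primeOrderClosure_eq_top_iff.mp htop]
  · rintro ⟨htop, hprime⟩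
    have ⟨_, hbot, _⟩ := hG
    have : Nontrivial G := Subgroup.nontrivial_iff.mp ⟨_, _, hbot⟩
    have hpos : 0 < domNumber G := domNumber_pos hG
    have hne : domNumber G ≠ 1 := fun hone ↦ domNumber_eq_one_iff.mp hone htop
    have hle : domNumber G ≤ 2 := domNumber_le_two_of_not_prime_radical hprime
    lia
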